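/- For every quaternion w with ‖w‖ < 1, the quaternion 1 − w² is invertible and ∑_{n=0}^∞ ‖wⁿ − (conj w)ⁿ‖² = 2/(1−‖w‖²) − 2·Re((1 − w²)⁻¹). (Dividing by ‖w − conj(w)‖², this computes the H²(𝔹)-norm of the spherical derivative of the Hardy-space reproducing kernel, ‖∂_s k_q(w)‖² = ‖w − conj(w)‖⁻²·(2/(1−‖w‖²) − 1/(1−w²) − 1/(1−(conj w)²)), a coefficient of the invariant Riemannian metric g.) -/

import Mathlib

local notation "ℍ" => Quaternion ℝ

/-! Expanding the square with `⟪q, star q⟫ = Re (q²)` gives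
`‖wⁿ - (star w)ⁿ‖² = 2 (‖w‖²)ⁿ - 2 Re ((w²)ⁿ)`, so the series is a combination of the geometric
series with ratios `‖w‖²` in `ℝ` and `w²` in `ℍ`. -/

theorem quaternion_norm_sub_star_sq (q : ℍ) :
    ‖q - star q‖ ^ 2 = 2 * ‖q‖ ^ 2 - 2 * (q ^ 2).re := by
  have inner_star : inner ℝ q (star q) = (q ^ 2).re := by
    rw [Quaternion.inner_def, star_star, sq]
  rw [norm_sub_sq_real, inner_star, Quaternion.norm_star]
  ring

theorem hasSum_quaternion_re {ι : Type*} {L : SummationFilter ι} {f : ι → ℍ} {a : ℍ}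
    (hf : HasSum f a L) : HasSum (fun i ↦ (f i).re) a.re L :=
  hf.map (QuaternionAlgebra.reₗ (-1 : ℝ) 0 (-1)) Quaternion.continuous_re

theorem hasSum_norm_sq_pow_sub_star_pow {w : ℍ} (hw : ‖w‖ < 1) :
    HasSum (fun n : ℕ ↦ ‖w ^ n - star w ^ n‖ ^ 2)
      (2 / (1 - ‖w‖ ^ 2) - 2 * ((1 - w ^ 2)⁻¹).re) := by
  have sq_norm_lt_one : ‖w‖ ^ 2 < 1 := pow_lt_one₀ (norm_nonneg w) hw two_ne_zero
  have hasSum_norm : HasSum (fun n : ℕ ↦ (‖w‖ ^ 2) ^ n) (1 - ‖w‖ ^ 2)⁻¹ :=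
    hasSum_geometric_of_lt_one (sq_nonneg _) sq_norm_lt_one
  have hasSum_re : HasSum (fun n : ℕ ↦ ((w ^ 2) ^ n).re) ((1 - w ^ 2)⁻¹).re :=
    hasSum_quaternion_re (hasSum_geometric_of_norm_lt_one (by rwa [norm_pow]))
  have term_eq (n : ℕ) :
      ‖w ^ n - star w ^ n‖ ^ 2 = 2 * (‖w‖ ^ 2) ^ n - 2 * ((w ^ 2) ^ n).re := by
    rw [← star_pow, quaternion_norm_sub_star_sq, norm_pow, pow_right_comm, pow_right_comm w]
  simpa only [term_eq, div_eq_mul_inv] using (hasSum_norm.mul_left 2).sub (hasSum_re.mul_left 2)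

/-- For every quaternion `w` with `‖w‖ < 1`, the quaternion `1 − w²` is invertible and
`∑_{n=0}^∞ ‖wⁿ − (conj w)ⁿ‖² = 2/(1−‖w‖²) − 2·Re((1 − w²)⁻¹)`.
(This computes the `H²(𝔹)`-norm of the spherical derivative of the Hardy-space
reproducing kernel, a coefficient of the invariant Riemannian metric `g`.) -/
theorem sum_norm_sq_pow_sub_star_pow (w : ℍ) (hw : ‖w‖ < 1) :
    (1 - w ^ 2) ≠ 0 ∧
    (∑' n : ℕ, ‖w ^ n - (star w) ^ n‖ ^ 2) =
      2 / (1 - ‖w‖ ^ 2) - 2 * ((1 - w ^ 2)⁻¹).re := by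
  have norm_sq_lt_one : ‖w ^ 2‖ < 1 := by
    rw [norm_pow]
    exact pow_lt_one₀ (norm_nonneg w) hw two_ne_zero
  exact ⟨(isUnit_one_sub_of_norm_lt_one norm_sq_lt_one).ne_zero,
    (hasSum_norm_sq_pow_sub_star_pow hw).tsum_eq⟩
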